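/- arXiv:1905.06101 — 4 statements merged into one kernel-verified Lean document; each statement's English description precedes it below -/
import Mathlib

section
/- Let d ≥ 1, let h be a d×d complex Hermitian matrix with an orthonormal eigenbasis e_1, …, e_d of ℂ^d, h e_k = h_k e_k, where h_1 ≥ … ≥ h_d, and let p_1 ≥ … ≥ p_d ≥ 0 be real numbers. Define the orthonormal basis φ_k = (e_k + e_{d−k+1})/√2 if 2k < d+1, φ_k = e_k if 2k = d+1, and φ_k = (e_k − e_{d−k+1})/√2 if 2k > d+1. Then 2 ∑_{i=1}^d ∑_{j=1}^d p_{i,j} |⟨φ_i, h φ_j⟩|² = (1/2) ∑_{k=1}^d p_{k,d-k+1} (h_k − h_{d-k+1})². (Attainment part of Theorem 1: the optimal initial state achieves the maximal quantum Fisher information.) -/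
/-- The coefficients `p_{i,j}`: `0` if `p i = p j = 0`, else `(p i - p j)² / (p i + p j)`. -/
noncomputable def pij {d : ℕ} (p : Fin d → ℝ) (i j : Fin d) : ℝ :=
  if p i = 0 ∧ p j = 0 then 0 else (p i - p j) ^ 2 / (p i + p j)

/-- The optimal orthonormal basis built from the eigenbasis `e` of the generator
(0-based: index `k` corresponds to the 1-based index `k+1`, and `k.rev` to `d-k+1`):
`φ_k = (e_k + e_{d-k+1})/√2` if `2k < d+1`, `φ_k = e_k` if `2k = d+1`,
`φ_k = (e_k - e_{d-k+1})/√2` if `2k > d+1`. -/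
noncomputable def optPhi {d : ℕ} (e : Fin d → EuclideanSpace ℂ (Fin d)) (k : Fin d) :
    EuclideanSpace ℂ (Fin d) :=
  if 2 * (k.val + 1) < d + 1 then ((Real.sqrt 2 : ℂ))⁻¹ • (e k + e k.rev)
  else if 2 * (k.val + 1) = d + 1 then e k
  else ((Real.sqrt 2 : ℂ))⁻¹ • (e k - e k.rev)

/-! Each `optPhi e k` lies in the plane spanned by `e k` and `e k.rev`. These planes are invariant
under the generator and mutually orthogonal, so `⟪optPhi e i, h (optPhi e j)⟫` can be nonzero only
for `j = i`, where the coefficient `pij p i i` vanishes, and for `j = i.rev`, where its modulus is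
half the gap between the two eigenvalues. -/

section Eigenvectors

open scoped InnerProductSpace

variable {𝕜 E : Type*} [RCLike 𝕜] [NormedAddCommGroup E] [InnerProductSpace 𝕜 E]
  {T : Module.End 𝕜 E}

lemma map_mem_span_image_of_eigenvectors {R M ι : Type*} [CommSemiring R] [AddCommMonoid M]
    [Module R M] {f : Module.End R M} {v : ι → M} {μ : ι → R} (hv : ∀ k, f (v k) = μ k • v k)
    {s : Set ι} {x : M} (hx : x ∈ Submodule.span R (v '' s)) :
    f x ∈ Submodule.span R (v '' s) := by
  have span_le_comap :
      Submodule.span R (v '' s) ≤ (Submodule.span R (v '' s)).comap f := by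
    rw [Submodule.span_le]
    rintro _ ⟨k, hk, rfl⟩
    rw [SetLike.mem_coe, Submodule.mem_comap, hv]
    exact Submodule.smul_mem _ _ (Submodule.subset_span ⟨k, hk, rfl⟩)
  exact span_le_comap hx

lemma inner_map_eq_zero_of_mem_span_of_disjoint {ι : Type*} {v : ι → E}
    (hortho : Pairwise fun i j => ⟪v i, v j⟫_𝕜 = 0) {μ : ι → 𝕜}
    (hv : ∀ k, T (v k) = μ k • v k) {s t : Set ι} (hst : Disjoint s t) {x y : E}
    (hx : x ∈ Submodule.span 𝕜 (v '' s)) (hy : y ∈ Submodule.span 𝕜 (v '' t)) :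
    ⟪x, T y⟫_𝕜 = 0 := by
  have spans_ortho : Submodule.span 𝕜 (v '' s) ⟂ Submodule.span 𝕜 (v '' t) := by
    rw [Submodule.isOrtho_span]
    rintro _ ⟨i, hi, rfl⟩ _ ⟨j, hj, rfl⟩
    exact hortho (hst.ne_of_mem hi hj)
  exact spans_ortho.inner_eq hx (map_mem_span_image_of_eigenvectors hv hy)

variable {u v : E} {α β : 𝕜}

lemma inner_add_map_sub_of_eigenvectors (hu : ‖u‖ = 1) (hv : ‖v‖ = 1) (huv : ⟪u, v⟫_𝕜 = 0)
    (hTu : T u = α • u) (hTv : T v = β • v) : ⟪u + v, T (u - v)⟫_𝕜 = α - β := by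
  simp [hTu, hTv, inner_add_left, inner_sub_right, inner_smul_right, inner_self_eq_norm_sq_to_K,
    hu, hv, huv, inner_eq_zero_symm.mp huv]

lemma inner_sub_map_add_of_eigenvectors (hu : ‖u‖ = 1) (hv : ‖v‖ = 1) (huv : ⟪u, v⟫_𝕜 = 0)
    (hTu : T u = α • u) (hTv : T v = β • v) : ⟪u - v, T (u + v)⟫_𝕜 = α - β := by
  simpa [← sub_eq_add_neg] using inner_add_map_sub_of_eigenvectors (v := -v) hu
    (by rwa [norm_neg]) (by rw [inner_neg_right, huv, neg_zero]) hTu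
    (by rw [map_neg, hTv, smul_neg])

lemma norm_inner_smul_map_smul (c : 𝕜) (x y : E) :
    ‖⟪c • x, T (c • y)⟫_𝕜‖ = ‖c‖ ^ 2 * ‖⟪x, T y⟫_𝕜‖ := by
  rw [map_smul, inner_smul_left, inner_smul_right, norm_mul, norm_mul, RCLike.norm_conj]
  ring

end Eigenvectors

lemma pij_self {d : ℕ} (p : Fin d → ℝ) (i : Fin d) : pij p i i = 0 := by
  simp [pij]

lemma disjoint_pair_rev {d : ℕ} {i j : Fin d} (hji : j ≠ i) (hjr : j ≠ i.rev) :
    Disjoint ({i, i.rev} : Set (Fin d)) {j, j.rev} := by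
  simp [hji, hjr, Fin.rev_eq_iff]

section OptimalBasis

open scoped InnerProductSpace

variable {d : ℕ} {e : Fin d → EuclideanSpace ℂ (Fin d)} {k : Fin d}

lemma optPhi_of_lt_rev (hk : k < k.rev) :
    optPhi e k = (√2 : ℂ)⁻¹ • (e k + e k.rev) := by
  rw [Fin.lt_def, Fin.val_rev] at hk
  exact if_pos (by lia)

lemma optPhi_of_rev_lt (hk : k.rev < k) :
    optPhi e k = (√2 : ℂ)⁻¹ • (e k - e k.rev) := by
  rw [Fin.lt_def, Fin.val_rev] at hk
  rw [optPhi, if_neg (by lia), if_neg (by lia)]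

lemma optPhi_mem_span (e : Fin d → EuclideanSpace ℂ (Fin d)) (k : Fin d) :
    optPhi e k ∈ Submodule.span ℂ (e '' {k, k.rev}) := by
  have self_mem : e k ∈ Submodule.span ℂ (e '' {k, k.rev}) :=
    Submodule.subset_span ⟨k, by simp, rfl⟩
  have rev_mem : e k.rev ∈ Submodule.span ℂ (e '' {k, k.rev}) :=
    Submodule.subset_span ⟨k.rev, by simp, rfl⟩
  unfold optPhi
  split_ifs
  · exact Submodule.smul_mem _ _ (add_mem self_mem rev_mem)
  · exact self_mem
  · exact Submodule.smul_mem _ _ (sub_mem self_mem rev_mem)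

variable {T : Module.End ℂ (EuclideanSpace ℂ (Fin d))} {a : Fin d → ℂ}

lemma inner_optPhi_map_optPhi_eq_zero (hortho : Pairwise fun i j => ⟪e i, e j⟫_ℂ = 0)
    (heig : ∀ k, T (e k) = a k • e k) {i j : Fin d} (hji : j ≠ i) (hjr : j ≠ i.rev) :
    ⟪optPhi e i, T (optPhi e j)⟫_ℂ = 0 :=
  inner_map_eq_zero_of_mem_span_of_disjoint hortho heig (disjoint_pair_rev hji hjr)
    (optPhi_mem_span e i) (optPhi_mem_span e j)

lemma norm_inner_optPhi_map_optPhi_rev (he : Orthonormal ℂ e)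
    (heig : ∀ k, T (e k) = a k • e k) (hk : k ≠ k.rev) :
    ‖⟪optPhi e k, T (optPhi e k.rev)⟫_ℂ‖ = ‖a k - a k.rev‖ / 2 := by
  have norm_sq_factor : ‖(√2 : ℂ)⁻¹‖ ^ 2 = 1 / 2 := by
    simp [abs_of_nonneg (Real.sqrt_nonneg 2)]
  rcases hk.lt_or_gt with hlt | hgt
  · rw [optPhi_of_lt_rev hlt, optPhi_of_rev_lt (by rwa [Fin.rev_rev]), Fin.rev_rev,
      norm_inner_smul_map_smul, norm_sq_factor, add_comm (e k),
      inner_add_map_sub_of_eigenvectors (he.1 _) (he.1 _) (he.2 hk.symm) (heig _) (heig _),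
      norm_sub_rev]
    ring
  · rw [optPhi_of_rev_lt hgt, optPhi_of_lt_rev (by rwa [Fin.rev_rev]), Fin.rev_rev,
      norm_inner_smul_map_smul, norm_sq_factor, add_comm (e k.rev),
      inner_sub_map_add_of_eigenvectors (he.1 _) (he.1 _) (he.2 hk) (heig _) (heig _)]
    ring

lemma sum_mul_norm_inner_optPhi_sq (he : Orthonormal ℂ e)
    (heig : ∀ k, T (e k) = a k • e k) {w : Fin d → ℝ} (hw : w k = 0) :
    ∑ j, w j * ‖⟪optPhi e k, T (optPhi e j)⟫_ℂ‖ ^ 2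
      = w k.rev * (‖a k - a k.rev‖ / 2) ^ 2 := by
  calc ∑ j, w j * ‖⟪optPhi e k, T (optPhi e j)⟫_ℂ‖ ^ 2
      = w k.rev * ‖⟪optPhi e k, T (optPhi e k.rev)⟫_ℂ‖ ^ 2 := by
        refine Fintype.sum_eq_single _ fun j hjr => ?_
        rcases eq_or_ne j k with rfl | hjk
        · rw [hw, zero_mul]
        · rw [inner_optPhi_map_optPhi_eq_zero he.2 heig hjk hjr, norm_zero, zero_pow two_ne_zero,
            mul_zero]
    _ = w k.rev * (‖a k - a k.rev‖ / 2) ^ 2 := by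
        rcases eq_or_ne k k.rev with hk | hk
        · rw [← hk, hw, zero_mul, zero_mul]
        · rw [norm_inner_optPhi_map_optPhi_rev he heig hk]

theorem maxQFI_attained_general (he : Orthonormal ℂ e) (heig : ∀ k, T (e k) = a k • e k)
    {c : Fin d → Fin d → ℝ} (hc : ∀ i, c i i = 0) :
    2 * ∑ i, ∑ j, c i j * ‖⟪optPhi e i, T (optPhi e j)⟫_ℂ‖ ^ 2
      = (1 / 2) * ∑ k, c k k.rev * ‖a k - a k.rev‖ ^ 2 := by
  simp_rw [sum_mul_norm_inner_optPhi_sq he heig (hc _), Finset.mul_sum]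
  exact Finset.sum_congr rfl fun k _ => by ring

end OptimalBasis

/-- Attainment part of Theorem 1: for the optimal basis `φ`, the quantum Fisher
information `2 ∑ᵢⱼ p_{i,j} |⟨φᵢ, h φⱼ⟩|²` equals
`(1/2) ∑ₖ p_{k,d-k+1} (h_k - h_{d-k+1})²`. -/
theorem maxQFI_attained {d : ℕ} (hd : 1 ≤ d)
    (h : Matrix (Fin d) (Fin d) ℂ) (hh : h.IsHermitian)
    (a : Fin d → ℝ) (ha : Antitone a)
    (e : Fin d → EuclideanSpace ℂ (Fin d)) (he : Orthonormal ℂ e)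
    (heig : ∀ k, Matrix.toEuclideanLin h (e k) = (a k : ℂ) • e k)
    (p : Fin d → ℝ) (hp : Antitone p) (hp0 : ∀ i, 0 ≤ p i) :
    2 * ∑ i, ∑ j, pij p i j *
        ‖(inner ℂ (optPhi e i) (Matrix.toEuclideanLin h (optPhi e j)) : ℂ)‖ ^ 2
      = (1 / 2) * ∑ k, pij p k k.rev * (a k - a k.rev) ^ 2 := by
  simpa [← Complex.ofReal_sub] using maxQFI_attained_general he heig (pij_self p)
end

section
/- Let d ≥ 4 and let p_1 ≥ … ≥ p_d ≥ 0 be real numbers. Then for all indices 1 ≤ i < j < k < l ≤ d, p_{i,l} + p_{j,k} ≥ p_{i,k} + p_{j,l}. -/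
/-!
Since `(x - y)² / (x + y) = x + y - 4 * (x * y / (x + y))` and the term `x + y` cancels from the
inequality, the claim says that `x * y / (x + y)` is supermodular on the nonnegative quadrant.
Its increment in `y` from `s` to `t` is `(t - s) * (x / (x + t)) * (x / (x + s))`,
which for `s ≤ t` is monotone in `x` because both fractions are.
-/

theorem sub_sq_div_add {K : Type*} [Field K] (x y : K) :
    (x - y) ^ 2 / (x + y) = x + y - 4 * (x * y / (x + y)) := by
  have polarization : (x - y) ^ 2 = (x + y) * (x + y) - 4 * (x * y) := by ring
  rw [polarization, sub_div, mul_self_div_self, mul_div_assoc]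

theorem pij_eq_add_sub {d : ℕ} (p : Fin d → ℝ) (i j : Fin d) :
    pij p i j = p i + p j - 4 * (p i * p j / (p i + p j)) := by
  rw [← sub_sq_div_add, pij, ite_eq_right_iff]
  rintro ⟨hi, hj⟩
  simp [hi, hj]

section OrderedField

variable {K : Type*} [Field K] [LinearOrder K] [IsStrictOrderedRing K] {x y s t : K}

theorem div_add_le_div_add_of_le (hx : 0 ≤ x) (ht : 0 ≤ t) (hxy : x ≤ y) :
    x / (x + t) ≤ y / (y + t) := by
  obtain rfl | hx := hx.eq_or_lt
  · rw [zero_div]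
    positivity
  · have hy : 0 < y := hx.trans_le hxy
    rw [div_le_div_iff₀ (by positivity) (by positivity)]
    linarith [mul_le_mul_of_nonneg_right hxy ht]

theorem mul_div_add_sub_mul_div_add (hx : 0 ≤ x) (hs : 0 ≤ s) (ht : 0 ≤ t) :
    x * t / (x + t) - x * s / (x + s) = (t - s) * (x / (x + t) * (x / (x + s))) := by
  obtain rfl | hx := hx.eq_or_lt
  · simp
  · have hxs : x + s ≠ 0 := by positivity
    have hxt : x + t ≠ 0 := by positivity
    field_simp
    ring

theorem mul_div_add_supermodular (hx : 0 ≤ x) (hs : 0 ≤ s) (hxy : x ≤ y) (hst : s ≤ t) :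
    y * s / (y + s) + x * t / (x + t) ≤ x * s / (x + s) + y * t / (y + t) := by
  have hy : 0 ≤ y := hx.trans hxy
  have ht : 0 ≤ t := hs.trans hst
  suffices increment_le :
      x * t / (x + t) - x * s / (x + s) ≤ y * t / (y + t) - y * s / (y + s) by
    linarith
  calc
    x * t / (x + t) - x * s / (x + s)
        = (t - s) * (x / (x + t) * (x / (x + s))) := mul_div_add_sub_mul_div_add hx hs ht
    _ ≤ (t - s) * (y / (y + t) * (y / (y + s))) :=
      mul_le_mul_of_nonneg_left
        (mul_le_mul (div_add_le_div_add_of_le hx ht hxy) (div_add_le_div_add_of_le hx hs hxy)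
          (by positivity) (by positivity))
        (sub_nonneg.2 hst)
    _ = y * t / (y + t) - y * s / (y + s) := (mul_div_add_sub_mul_div_add hy hs ht).symm

end OrderedField

theorem pij_main_inequality_general {d : ℕ} (p : Fin d → ℝ) {i j k l : Fin d}
    (hj : 0 ≤ p j) (hl : 0 ≤ p l) (hij : p j ≤ p i) (hkl : p l ≤ p k) :
    pij p i k + pij p j l ≤ pij p i l + pij p j k := by
  simp only [pij_eq_add_sub]
  linarith [mul_div_add_supermodular hj hl hij hkl]

/-- For `p_1 ≥ … ≥ p_d ≥ 0` and indices `i < j < k < l`,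
`p_{i,l} + p_{j,k} ≥ p_{i,k} + p_{j,l}`. -/
theorem pij_main_inequality {d : ℕ} (hd : 4 ≤ d)
    (p : Fin d → ℝ) (hp : Antitone p) (hp0 : ∀ i, 0 ≤ p i)
    (i j k l : Fin d) (hij : i < j) (hjk : j < k) (hkl : k < l) :
    pij p i k + pij p j l ≤ pij p i l + pij p j k :=
  pij_main_inequality_general p (hp0 j) (hp0 l) (hp hij.le) (hp hkl.le)
end

section
/- Let d ≥ 4 and let p_1 ≥ … ≥ p_d ≥ 0 be real numbers. Then for all indices 1 < i+1 < k < l ≤ d, p_{i,l} − p_{i+1,l} ≥ p_{i,k} − p_{i+1,k}. (Lemma 1(ii) of the Supplemental Material.) -/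
/-!
For fixed `a ≥ b ≥ 0`, the difference of `(a - x)² / (a + x)` and `(b - x)² / (b + x)` factors as
`(a - b) (1 - 4 · x / (a + x) · x / (b + x))`. Both fractions `x / (a + x)` and `x / (b + x)`
increase with `x ≥ 0`, so the difference decreases with `x`. With `0 / 0 = 0` all of this
persists when a denominator vanishes, which is the case that `pij` singles out.
-/

section OrderedField

variable {𝕜 : Type*} [Field 𝕜] [LinearOrder 𝕜] [IsStrictOrderedRing 𝕜] {a b x : 𝕜}

theorem sq_sub_div_add_sub_sq_sub_div_add (ha : 0 ≤ a) (hb : 0 ≤ b) (hx : 0 ≤ x) :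
    (a - x) ^ 2 / (a + x) - (b - x) ^ 2 / (b + x) =
      (a - b) * (1 - 4 * (x / (a + x) * (x / (b + x)))) := by
  rcases hx.eq_or_lt with rfl | hx
  · simp [sq]
  · have hax : a + x ≠ 0 := by positivity
    have hbx : b + x ≠ 0 := by positivity
    field_simp
    ring

theorem monotoneOn_div_const_add (ha : 0 ≤ a) :
    MonotoneOn (fun x : 𝕜 ↦ x / (a + x)) (Set.Ici 0) := by
  intro y (hy : 0 ≤ y) x (hx : 0 ≤ x) hyx
  rcases hy.eq_or_lt with rfl | hy
  · simpa using div_nonneg hx (add_nonneg ha hx)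
  · have hx : 0 < x := hy.trans_le hyx
    rw [div_le_div_iff₀ (by positivity) (by positivity)]
    linarith [mul_le_mul_of_nonneg_right hyx ha]

theorem antitoneOn_sq_sub_div_add_sub_sq_sub_div_add (hb : 0 ≤ b) (hba : b ≤ a) :
    AntitoneOn (fun x : 𝕜 ↦ (a - x) ^ 2 / (a + x) - (b - x) ^ 2 / (b + x)) (Set.Ici 0) := by
  intro y (hy : 0 ≤ y) x (hx : 0 ≤ x) hyx
  have ha : 0 ≤ a := hb.trans hba
  have hprod : y / (a + y) * (y / (b + y)) ≤ x / (a + x) * (x / (b + x)) :=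
    mul_le_mul (monotoneOn_div_const_add ha hy hx hyx) (monotoneOn_div_const_add hb hy hx hyx)
      (by positivity) (by positivity)
  simp only [sq_sub_div_add_sub_sq_sub_div_add ha hb, hx, hy]
  refine mul_le_mul_of_nonneg_left ?_ (sub_nonneg.2 hba)
  gcongr

end OrderedField

theorem pij_eq_div {d : ℕ} (p : Fin d → ℝ) (i j : Fin d) :
    pij p i j = (p i - p j) ^ 2 / (p i + p j) := by
  unfold pij
  split_ifs with h
  · simp [h.1, h.2]
  · rfl

theorem pij_row_difference_general {d : ℕ} (p : Fin d → ℝ) {i j k l : Fin d}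
    (hj : 0 ≤ p j) (hl : 0 ≤ p l) (hji : p j ≤ p i) (hlk : p l ≤ p k) :
    pij p i k - pij p j k ≤ pij p i l - pij p j l := by
  simp only [pij_eq_div]
  exact antitoneOn_sq_sub_div_add_sub_sq_sub_div_add hj hji hl (hl.trans hlk) hlk

/-- Lemma 1(ii): for `p_1 ≥ … ≥ p_d ≥ 0` and indices with `j = i+1 < k < l`,
`p_{i,l} − p_{i+1,l} ≥ p_{i,k} − p_{i+1,k}`. -/
theorem pij_row_difference {d : ℕ} (hd : 4 ≤ d)
    (p : Fin d → ℝ) (hp : Antitone p) (hp0 : ∀ i, 0 ≤ p i)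
    (i j k l : Fin d) (hij : j.val = i.val + 1) (hjk : j < k) (hkl : k < l) :
    pij p i k - pij p j k ≤ pij p i l - pij p j l := by
  have hle : i ≤ j := Fin.le_def.2 (by omega)
  exact pij_row_difference_general p (hp0 j) (hp0 l) (hp hle) (hp hkl.le)
end

section
/- Let d ≥ 1, let p_1 ≥ … ≥ p_d ≥ 0 be real numbers, let A and B be d×d complex Hermitian matrices, and let C = A + B, with eigenvalues a_1 ≥ … ≥ a_d, b_1 ≥ … ≥ b_d, and c_1 ≥ … ≥ c_d, respectively. Then ∑_{i=1}^d p_{i,d−i+1} (c_i − c_{d−i+1})² ≤ ∑_{i=1}^d p_{i,d−i+1} (a_i − a_{d−i+1} + b_i − b_{d−i+1})². (Lemma 6 of the Supplemental Material.) -/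
/-!
Put `q i = p_{i,d-i+1} (c_i - c_{d-i+1})`. The weights are symmetric under `i ↦ d - i + 1` and
decrease towards the middle index, so `q` is decreasing and odd under the reflection. Oddness turns
`∑ q_i (x_i - x_{d-i+1})` into `2 ∑ q_i x_i`, and Ky Fan's inequality
`∑ q_i c_i ≤ ∑ q_i a_i + ∑ q_i b_i`, valid for decreasing `q`, then bounds the left-hand side by
`∑ p_{i,d-i+1} (c_i - c_{d-i+1}) (a_i - a_{d-i+1} + b_i - b_{d-i+1})`. Cauchy–Schwarz concludes.

Ky Fan's inequality holds because the diagonal of a matrix in one orthonormal basis is the image of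
its eigenvalues under a doubly stochastic matrix, which by Birkhoff's theorem and the rearrangement
inequality cannot increase the pairing with a similarly ordered vector.
-/

open Matrix
open scoped InnerProductSpace

section Coefficients

theorem sub_sq_div_add_le_sub_sq_div_add {K : Type*} [Field K] [LinearOrder K]
    [IsStrictOrderedRing K] {x x' y y' : K} (hy : 0 ≤ y) (hyy' : y ≤ y') (hyx' : y' ≤ x')
    (hxx' : x' ≤ x) :
    (x' - y') ^ 2 / (x' + y') ≤ (x - y) ^ 2 / (x + y) := by
  rcases (show 0 ≤ x' + y' by linarith).eq_or_lt with h | h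
  · rw [← h, div_zero]
    exact div_nonneg (sq_nonneg _) (by linarith)
  have hxy : 0 < x + y := by linarith
  have ratio_le : (x' - y') / (x' + y') ≤ (x - y) / (x + y) := by
    have : x' * y ≤ x * y' := mul_le_mul hxx' hyy' hy (by linarith)
    rw [div_le_div_iff₀ h hxy]
    linarith
  rw [sq, sq, mul_div_assoc, mul_div_assoc]
  exact mul_le_mul (by linarith) ratio_le (div_nonneg (by linarith) h.le) (by linarith)

variable {d : ℕ} {p : Fin d → ℝ}

theorem pij_eq_sub_sq_div_add (p : Fin d → ℝ) (i j : Fin d) :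
    pij p i j = (p i - p j) ^ 2 / (p i + p j) := by
  unfold pij
  split_ifs with h
  · simp [h.1, h.2]
  · rfl

theorem pij_comm (p : Fin d → ℝ) (i j : Fin d) : pij p i j = pij p j i := by
  rw [pij_eq_sub_sq_div_add, pij_eq_sub_sq_div_add, add_comm, sub_sq_comm]

theorem pij_nonneg {i j : Fin d} (hi : 0 ≤ p i) (hj : 0 ≤ p j) : 0 ≤ pij p i j := by
  rw [pij_eq_sub_sq_div_add]
  positivity

theorem antitoneOn_pij_rev (hp : Antitone p) (hp0 : ∀ i, 0 ≤ p i) :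
    AntitoneOn (fun i => pij p i i.rev) {i | i ≤ i.rev} := by
  intro i _ j hj hij
  simp only [pij_eq_sub_sq_div_add]
  exact sub_sq_div_add_le_sub_sq_div_add (hp0 _) (hp (Fin.rev_le_rev.mpr hij)) (hp hj) (hp hij)

end Coefficients

section Reflection

variable {d : ℕ}

theorem antitone_of_antitoneOn_of_rev_eq_neg {α : Type*} [AddCommGroup α] [PartialOrder α]
    [IsOrderedAddMonoid α] {f : Fin d → α} (hodd : ∀ i, f i.rev = -f i)
    (hnonneg : ∀ i ≤ i.rev, 0 ≤ f i) (hanti : AntitoneOn f {i | i ≤ i.rev}) : Antitone f := by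
  have rev_mem {i : Fin d} (hi : i.rev ≤ i) : i.rev ≤ i.rev.rev := by rwa [Fin.rev_rev]
  have nonpos {i : Fin d} (hi : i.rev ≤ i) : f i ≤ 0 := by
    simpa [hodd] using hnonneg i.rev (rev_mem hi)
  intro i j hij
  rcases le_total j j.rev with hj | hj
  · exact hanti (hij.trans (hj.trans (Fin.rev_le_rev.mpr hij))) hj hij
  rcases le_total i i.rev with hi | hi
  · exact (nonpos hj).trans (hnonneg i hi)
  · simpa [hodd] using hanti (rev_mem hj) (rev_mem hi) (Fin.rev_le_rev.mpr hij)

theorem sum_mul_sub_rev_eq_two_mul_sum {R : Type*} [CommRing R] {f : Fin d → R}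
    (hodd : ∀ i, f i.rev = -f i) (x : Fin d → R) :
    ∑ i, f i * (x i - x i.rev) = 2 * ∑ i, f i * x i := by
  have sum_rev : ∑ i, f i * x i.rev = -∑ i, f i * x i := by
    rw [← Equiv.sum_comp Fin.revPerm fun i => f i * x i, ← Finset.sum_neg_distrib]
    simp [hodd]
  simp only [mul_sub, Finset.sum_sub_distrib, sum_rev]
  ring

/-- The vector `q i = r i * (c i - c i.rev)` against which the eigenvalues are tested in Ky Fan's
inequality. -/
def weightedGap {R : Type*} [Ring R] (r c : Fin d → R) (i : Fin d) : R :=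
  r i * (c i - c i.rev)

theorem weightedGap_rev {R : Type*} [Ring R] {r : Fin d → R} (hr : ∀ i, r i.rev = r i)
    (c : Fin d → R) (i : Fin d) : weightedGap r c i.rev = -weightedGap r c i := by
  simp [weightedGap, hr, ← mul_neg]

theorem antitone_weightedGap {R : Type*} [Ring R] [PartialOrder R] [IsOrderedRing R]
    {r c : Fin d → R} (hr0 : ∀ i, 0 ≤ r i) (hrev : ∀ i, r i.rev = r i)
    (hr : AntitoneOn r {i | i ≤ i.rev}) (hc : Antitone c) : Antitone (weightedGap r c) := by
  have gap_nonneg {i : Fin d} (hi : i ≤ i.rev) : 0 ≤ c i - c i.rev := sub_nonneg.mpr (hc hi)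
  refine antitone_of_antitoneOn_of_rev_eq_neg (weightedGap_rev hrev c)
    (fun i hi => mul_nonneg (hr0 i) (gap_nonneg hi)) fun i hi j hj hij => ?_
  have gap_le : c j - c j.rev ≤ c i - c i.rev :=
    sub_le_sub (hc hij) (hc (Fin.rev_le_rev.mpr hij))
  exact mul_le_mul (hr hi hj hij) gap_le (gap_nonneg hj) (hr0 i)

end Reflection

theorem sum_mul_sq_le_of_sum_mul_sq_le_sum_mul_mul {ι K : Type*} [CommRing K] [LinearOrder K]
    [IsStrictOrderedRing K] {s : Finset ι} {r x y : ι → K} (hr : ∀ i ∈ s, 0 ≤ r i)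
    (h : ∑ i ∈ s, r i * x i ^ 2 ≤ ∑ i ∈ s, r i * x i * y i) :
    ∑ i ∈ s, r i * x i ^ 2 ≤ ∑ i ∈ s, r i * y i ^ 2 := by
  have amgm : 2 * ∑ i ∈ s, r i * x i * y i ≤ ∑ i ∈ s, r i * x i ^ 2 + ∑ i ∈ s, r i * y i ^ 2 := by
    rw [Finset.mul_sum, ← Finset.sum_add_distrib]
    refine Finset.sum_le_sum fun i hi => ?_
    linear_combination mul_nonneg (hr i hi) (sq_nonneg (x i - y i))
  linarith

theorem dotProduct_mulVec_le_dotProduct_of_mem_doublyStochastic {n R : Type*} [Fintype n]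
    [DecidableEq n] [Field R] [LinearOrder R] [IsStrictOrderedRing R] {M : Matrix n n R}
    (hM : M ∈ doublyStochastic R n) {q a : n → R} (hqa : Monovary q a) :
    q ⬝ᵥ M *ᵥ a ≤ q ⬝ᵥ a := by
  have isLinear : IsLinearMap R fun M : Matrix n n R => q ⬝ᵥ M *ᵥ a :=
    ⟨fun M N => by simp [add_mulVec], fun t M => by simp [smul_mulVec]⟩
  rw [← SetLike.mem_coe, doublyStochastic_eq_convexHull_permMatrix] at hM
  refine convexHull_min ?_ (convex_halfSpace_le isLinear (q ⬝ᵥ a)) hM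
  rintro _ ⟨σ, rfl⟩
  simpa [permMatrix_mulVec, dotProduct] using hqa.sum_mul_comp_perm_le_sum_mul (σ := σ)

section KyFan

variable {ι 𝕜 E : Type*} [Fintype ι] [RCLike 𝕜] [NormedAddCommGroup E] [InnerProductSpace 𝕜 E]

theorem norm_inner_sq_mem_doublyStochastic [DecidableEq ι] (u w : OrthonormalBasis ι 𝕜 E) :
    Matrix.of (fun i j => ‖⟪u j, w i⟫_𝕜‖ ^ 2) ∈ doublyStochastic ℝ ι := by
  refine mem_doublyStochastic_iff_sum.mpr ⟨fun i j => sq_nonneg _, fun i => ?_, fun j => ?_⟩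
  · simp [u.sum_sq_norm_inner_right]
  · simp [w.sum_sq_norm_inner_left]

theorem re_inner_apply_self_eq_sum (u : OrthonormalBasis ι 𝕜 E) {T : E →ₗ[𝕜] E} {a : ι → ℝ}
    (hT : ∀ k, T (u k) = (a k : 𝕜) • u k) (x : E) :
    RCLike.re ⟪x, T x⟫_𝕜 = ∑ j, ‖⟪u j, x⟫_𝕜‖ ^ 2 * a j := by
  have apply_eq : T x = ∑ j, ⟪u j, x⟫_𝕜 • (a j : 𝕜) • u j := by
    conv_lhs => rw [← u.sum_repr' x]
    simp only [map_sum, map_smul, hT]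
  rw [apply_eq, inner_sum, map_sum]
  refine Finset.sum_congr rfl fun j _ => ?_
  rw [inner_smul_right, inner_smul_right, mul_left_comm, RCLike.re_ofReal_mul,
    inner_mul_symm_re_eq_norm, norm_mul, norm_inner_symm x, sq, mul_comm]

theorem sum_mul_re_inner_apply_self_le (u w : OrthonormalBasis ι 𝕜 E) {T : E →ₗ[𝕜] E}
    {a q : ι → ℝ} (hT : ∀ k, T (u k) = (a k : 𝕜) • u k) (hqa : Monovary q a) :
    ∑ i, q i * RCLike.re ⟪w i, T (w i)⟫_𝕜 ≤ ∑ i, q i * a i := by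
  classical
  simp only [re_inner_apply_self_eq_sum u hT]
  exact dotProduct_mulVec_le_dotProduct_of_mem_doublyStochastic
    (norm_inner_sq_mem_doublyStochastic u w) hqa

theorem sum_mul_eigenvalue_add_le (u v w : OrthonormalBasis ι 𝕜 E) {S T : E →ₗ[𝕜] E}
    {a b c q : ι → ℝ} (hS : ∀ k, S (u k) = (a k : 𝕜) • u k)
    (hT : ∀ k, T (v k) = (b k : 𝕜) • v k) (hST : ∀ k, (S + T) (w k) = (c k : 𝕜) • w k)
    (hqa : Monovary q a) (hqb : Monovary q b) :
    ∑ i, q i * c i ≤ ∑ i, q i * (a i + b i) := by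
  have eigenvalue_eq (i : ι) :
      c i = RCLike.re ⟪w i, S (w i)⟫_𝕜 + RCLike.re ⟪w i, T (w i)⟫_𝕜 := by
    rw [← map_add, ← inner_add_right, ← LinearMap.add_apply, hST, inner_smul_right]
    simp
  simp only [eigenvalue_eq, mul_add, Finset.sum_add_distrib]
  exact add_le_add (sum_mul_re_inner_apply_self_le u w hS hqa)
    (sum_mul_re_inner_apply_self_le v w hT hqb)

end KyFan

section WeightedSum

variable {𝕜 E : Type*} [RCLike 𝕜] [NormedAddCommGroup E] [InnerProductSpace 𝕜 E]

theorem exists_orthonormalBasis_coe_eq {ι : Type*} [Fintype ι] [FiniteDimensional 𝕜 E]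
    (hdim : Module.finrank 𝕜 E = Fintype.card ι) {u : ι → E} (hu : Orthonormal 𝕜 u) :
    ∃ b : OrthonormalBasis ι 𝕜 E, ⇑b = u :=
  ⟨.mk hu (hu.linearIndependent.span_eq_top_of_card_eq_finrank' hdim.symm).ge, by simp⟩

theorem pij_weighted_sum_inequality_general [FiniteDimensional 𝕜 E] {d : ℕ}
    (hdim : Module.finrank 𝕜 E = d) {r : Fin d → ℝ} (hr0 : ∀ i, 0 ≤ r i)
    (hrev : ∀ i, r i.rev = r i) (hr : AntitoneOn r {i | i ≤ i.rev}) {S T : E →ₗ[𝕜] E}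
    {a b c : Fin d → ℝ} (ha : Antitone a) (hb : Antitone b) (hc : Antitone c) {u v w : Fin d → E}
    (hu : Orthonormal 𝕜 u) (hv : Orthonormal 𝕜 v) (hw : Orthonormal 𝕜 w)
    (hS : ∀ k, S (u k) = (a k : 𝕜) • u k) (hT : ∀ k, T (v k) = (b k : 𝕜) • v k)
    (hST : ∀ k, (S + T) (w k) = (c k : 𝕜) • w k) :
    ∑ i, r i * (c i - c i.rev) ^ 2 ≤ ∑ i, r i * (a i - a i.rev + (b i - b i.rev)) ^ 2 := by
  replace hdim : Module.finrank 𝕜 E = Fintype.card (Fin d) := by simpa using hdim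
  obtain ⟨u, rfl⟩ := exists_orthonormalBasis_coe_eq hdim hu
  obtain ⟨v, rfl⟩ := exists_orthonormalBasis_coe_eq hdim hv
  obtain ⟨w, rfl⟩ := exists_orthonormalBasis_coe_eq hdim hw
  have hq : Antitone (weightedGap r c) := antitone_weightedGap hr0 hrev hr hc
  refine sum_mul_sq_le_of_sum_mul_sq_le_sum_mul_mul (fun i _ => hr0 i) ?_
  calc ∑ i, r i * (c i - c i.rev) ^ 2
      = ∑ i, weightedGap r c i * (c i - c i.rev) := by simp only [weightedGap, sq, mul_assoc]
    _ = 2 * ∑ i, weightedGap r c i * c i :=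
        sum_mul_sub_rev_eq_two_mul_sum (weightedGap_rev hrev c) c
    _ ≤ 2 * ∑ i, weightedGap r c i * (a i + b i) :=
        mul_le_mul_of_nonneg_left
          (sum_mul_eigenvalue_add_le u v w hS hT hST (hq.monovary ha) (hq.monovary hb)) zero_le_two
    _ = ∑ i, weightedGap r c i * (a i + b i - (a i.rev + b i.rev)) :=
        (sum_mul_sub_rev_eq_two_mul_sum (weightedGap_rev hrev c) fun i => a i + b i).symm
    _ = ∑ i, r i * (c i - c i.rev) * (a i - a i.rev + (b i - b i.rev)) := by
        simp only [weightedGap, add_sub_add_comm]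

end WeightedSum

/-- Lemma 6 of the Supplemental Material: for `p_1 ≥ … ≥ p_d ≥ 0` and Hermitian
`A, B, C = A + B` with decreasingly ordered eigenvalues `a, b, c` (each witnessed by
an orthonormal eigenbasis),
`∑ᵢ p_{i,d−i+1} (cᵢ − c_{d−i+1})² ≤ ∑ᵢ p_{i,d−i+1} (aᵢ − a_{d−i+1} + bᵢ − b_{d−i+1})²`. -/
theorem pij_weighted_sum_inequality {d : ℕ} (hd : 1 ≤ d)
    (p : Fin d → ℝ) (hp : Antitone p) (hp0 : ∀ i, 0 ≤ p i)
    (A B : Matrix (Fin d) (Fin d) ℂ) (hA : A.IsHermitian) (hB : B.IsHermitian)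
    (a b c : Fin d → ℝ) (ha : Antitone a) (hb : Antitone b) (hc : Antitone c)
    (u v w : Fin d → EuclideanSpace ℂ (Fin d))
    (hu : Orthonormal ℂ u) (hv : Orthonormal ℂ v) (hw : Orthonormal ℂ w)
    (hAu : ∀ k, Matrix.toEuclideanLin A (u k) = (a k : ℂ) • u k)
    (hBv : ∀ k, Matrix.toEuclideanLin B (v k) = (b k : ℂ) • v k)
    (hCw : ∀ k, Matrix.toEuclideanLin (A + B) (w k) = (c k : ℂ) • w k) :
    ∑ i, pij p i i.rev * (c i - c i.rev) ^ 2
      ≤ ∑ i, pij p i i.rev * (a i - a i.rev + (b i - b i.rev)) ^ 2 :=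
  pij_weighted_sum_inequality_general finrank_euclideanSpace_fin
    (fun i => pij_nonneg (hp0 i) (hp0 i.rev)) (fun i => by rw [Fin.rev_rev, pij_comm])
    (antitoneOn_pij_rev hp hp0) ha hb hc hu hv hw hAu hBv (by simpa using hCw)
end
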